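/- There exist constants C > 0 and t₀ > 0 such that for all t ∈ (0,t₀) and all δ > 0, | (4πt)^{11/2}·(sinh δ/δ)⁵·e^{−δ²/(4t)}·q_t(cosh δ) − 1 − (25 + 20(sinh δ − δ·cosh δ)/(δ²·sinh δ))·t | ≤ C·t². That is, q_t(cosh δ) = (1/(4πt)^{11/2})·(δ/sinh δ)⁵·e^{δ²/(4t)}·(1 + (25 + 20(sinh δ − δ cosh δ)/(δ² sinh δ))·t + t²·R₂(t,δ)) with R₂ uniformly bounded as t → 0 on δ ∈ [0,∞). -/

import Mathlib

open Real MeasureTheory Filter Topology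

/-- Jacobi polynomial `P_k^{3,b}` (with `b = m+3` octonionic, `b = m+1` quaternionic),
given by the polynomial extension of the Rodrigues formula. -/
noncomputable def jacP (k b : ℕ) : Polynomial ℝ :=
  Polynomial.C ((-1 : ℝ) ^ k / (2 ^ k * (Nat.factorial k : ℝ))) *
    (Polynomial.derivative^[k]
        ((1 - Polynomial.X) ^ (k + 3) * (1 + Polynomial.X) ^ (b + k)) /
      ((1 - Polynomial.X) ^ 3 * (1 + Polynomial.X) ^ b))

/-- Normalized eigenfunction `h_m` of the radial Laplacian on `S^7`. -/
noncomputable def hOct (m : ℕ) (η : ℝ) : ℝ :=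
  (Real.Gamma (7 / 2) / (Real.sqrt π * Real.Gamma 3)) *
    ∫ φ in (0 : ℝ)..π,
      (((Real.cos η : ℂ) + Complex.I * ((Real.sin η * Real.cos φ : ℝ) : ℂ)) ^ m).re *
        (Real.sin φ) ^ 5

/-- Coefficient `α_{k,m}`. -/
noncomputable def alphOct (k m : ℕ) : ℝ :=
  (96 / π ^ 8) * (m + 3) * (2 * k + m + 7) *
    (Nat.choose (k + m + 6) (k + m + 3)) * (Nat.choose (m + 5) m)

/-- Subelliptic heat kernel of the octonionic Hopf fibration, in cylindric coordinates. -/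
noncomputable def pOct (t r η : ℝ) : ℝ :=
  ∑' m : ℕ, ∑' k : ℕ,
    alphOct k m * hOct m η * Real.exp (-(4 * ((k * (k + m + 7) + 2 * m : ℕ) : ℝ)) * t) *
      (Real.cos r) ^ m * (jacP k (m + 3)).eval (Real.cos (2 * r))

/-- Coefficient `β_{k,m}` of the quaternionic heat kernel. -/
noncomputable def betQ (k m : ℕ) : ℝ :=
  (Real.Gamma 4 / (2 * π ^ 6)) * (2 * k + m + 5) * (m + 1) *
    (Nat.choose (k + m + 4) (k + m + 1))

/-- Subelliptic heat kernel of the quaternionic Hopf fibration on `S^11`. -/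
noncomputable def pQuat (t r η : ℝ) : ℝ :=
  ∑' m : ℕ, ∑' k : ℕ,
    betQ k m * Real.exp (-(4 * ((k * (k + m + 5) + 2 * m : ℕ) : ℝ)) * t) *
      (Real.sin ((m + 1) * η) / Real.sin η) *
      (Real.cos r) ^ m * (jacP k (m + 1)).eval (Real.cos (2 * r))

/-- Gegenbauer polynomial `C_m^5` (polynomial extension to all real `x`). -/
noncomputable def geg5 (m : ℕ) (x : ℝ) : ℝ :=
  ∑ j ∈ Finset.range (m / 2 + 1),
    (-1 : ℝ) ^ j * (Nat.factorial (m - j + 4)) /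
      ((Nat.factorial 4) * (Nat.factorial j) * (Nat.factorial (m - 2 * j))) * (2 * x) ^ (m - 2 * j)

/-- Radial heat kernel of the round sphere `S^11`, as a function of `cos δ`. -/
noncomputable def qS11 (t x : ℝ) : ℝ :=
  (Real.Gamma 5 / (2 * π ^ 6)) *
    ∑' m : ℕ, (m + 5) * Real.exp (-((m * (m + 10) : ℕ) : ℝ) * t) * geg5 m x

/-- The kernel `g_t(η,y)` appearing in the integral representation. -/
noncomputable def gInt (t η y : ℝ) : ℝ :=
  (Real.sin η)⁻¹ ^ 3 *
    (Real.cos (η * y / (2 * t)) * (2 * y) * (η - 3 * t * Real.cot η) +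
      Real.sin (η * y / (2 * t)) *
        (8 * t ^ 2 * Real.cot η ^ 2 + 4 * t ^ 2 * ((Real.sin η)⁻¹) ^ 2 -
          6 * t * η * Real.cot η + 2 * t + η ^ 2 - y ^ 2))

/-- Theta-type function `V(t,δ)`. -/
noncomputable def Vtheta (t δ : ℝ) : ℝ :=
  (1 / Real.sqrt (4 * π * t)) * ∑' k : ℤ, Real.exp (-(δ - 2 * k * π) ^ 2 / (4 * t))

/-- The operator `f ↦ -(1/(2π sin δ)) f'`. -/
noncomputable def Dop (f : ℝ → ℝ) : ℝ → ℝ :=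
  fun δ => -(1 / (2 * π * Real.sin δ)) * deriv f δ

/-- Taylor coefficients of the `j`-th derivative of `v ↦ cosh √v`. -/
noncomputable def cc (j k : ℕ) : ℝ :=
  (Nat.factorial (k + j) : ℝ) / ((Nat.factorial k : ℝ) * (Nat.factorial (2 * (k + j)) : ℝ))

/-- The `j`-th derivative of the entire function `v ↦ cosh √v`. -/
noncomputable def CC (j : ℕ) (v : ℝ) : ℝ := ∑' k : ℕ, cc j k * v ^ k

lemma cc_pos (j k : ℕ) : 0 < cc j k := by
  unfold cc; positivity

lemma cc_rec (j k : ℕ) : cc (j + 1) k * (4 * k + 4 * j + 2) = cc j k := by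
  unfold cc
  have h1 : Nat.factorial (k + (j + 1)) = (k + j + 1) * Nat.factorial (k + j) := by
    rw [← add_assoc, Nat.factorial_succ]
  have h2 : Nat.factorial (2 * (k + (j + 1))) =
      (2 * (k + j) + 2) * ((2 * (k + j) + 1) * Nat.factorial (2 * (k + j))) := by
    rw [show 2 * (k + (j + 1)) = 2 * (k + j) + 1 + 1 by ring, Nat.factorial_succ,
      Nat.factorial_succ]
  rw [h1, h2]
  push_cast
  have := Nat.factorial_pos k
  have := Nat.factorial_pos (k + j)
  have := Nat.factorial_pos (2 * (k + j))
  field_simp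
  ring

lemma cc_succ (j k : ℕ) : ((k : ℝ) + 1) * cc j (k + 1) = cc (j + 1) k := by
  unfold cc
  rw [show k + 1 + j = k + (j + 1) by ring, Nat.factorial_succ k]
  push_cast
  field_simp

lemma cc_anti (j k : ℕ) : cc (j + 1) k ≤ cc j k := by
  rw [← cc_rec j k]
  have := cc_pos (j + 1) k
  have : (0 : ℝ) ≤ k := by positivity
  have : (0 : ℝ) ≤ j := by positivity
  nlinarith

lemma cc_zero (k : ℕ) : cc 0 k = 1 / (Nat.factorial (2 * k) : ℝ) := by
  unfold cc
  simp only [add_zero]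
  field_simp

lemma cc_le_zero (j k : ℕ) : cc j k ≤ cc 0 k := by
  induction j with
  | zero => exact le_rfl
  | succ j ih => exact (cc_anti j k).trans ih

lemma cc_le (j k : ℕ) : cc j k ≤ 1 / (Nat.factorial k : ℝ) := by
  refine (cc_le_zero j k).trans ?_
  rw [cc_zero]
  have : Nat.factorial k ≤ Nat.factorial (2 * k) := Nat.factorial_le (by omega)
  have h : (0 : ℝ) < Nat.factorial k := by positivity
  gcongr

lemma summable_CC (j : ℕ) (v : ℝ) : Summable fun k : ℕ => cc j k * v ^ k := by
  refine Summable.of_norm_bounded (Real.summable_pow_div_factorial |v|) fun k => ?_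
  rw [norm_mul, norm_pow, Real.norm_eq_abs, Real.norm_eq_abs, abs_of_pos (cc_pos j k),
    div_eq_mul_one_div, mul_comm]
  gcongr
  exact cc_le j k

lemma abs_CC_le (j : ℕ) (v : ℝ) : |CC j v| ≤ CC 0 |v| := by
  refine tsum_of_norm_bounded (f := fun k => cc j k * v ^ k) (summable_CC 0 |v|).hasSum fun k => ?_
  rw [norm_mul, norm_pow, Real.norm_eq_abs, Real.norm_eq_abs, abs_of_pos (cc_pos j k)]
  gcongr
  exact cc_le_zero j k

lemma CC_zero_mono {a b : ℝ} (ha : 0 ≤ a) (h : a ≤ b) : CC 0 a ≤ CC 0 b := by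
  refine (summable_CC 0 a).tsum_le_tsum (fun k => ?_) (summable_CC 0 b)
  have := (cc_pos 0 k).le
  gcongr

lemma CC_anti (j : ℕ) {v : ℝ} (hv : 0 ≤ v) : CC (j + 1) v ≤ CC j v := by
  refine (summable_CC _ v).tsum_le_tsum (fun k => ?_) (summable_CC _ v)
  gcongr
  exact cc_anti j k

lemma CC_pos (j : ℕ) {v : ℝ} (hv : 0 ≤ v) : 0 < CC j v := by
  refine (summable_CC j v).tsum_pos (fun k => ?_) 0 ?_
  · have := (cc_pos j k).le
    positivity
  · simpa using cc_pos j 0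

lemma CC_anti' {i j : ℕ} (hij : i ≤ j) {v : ℝ} (hv : 0 ≤ v) : CC j v ≤ CC i v := by
  induction j, hij using Nat.le_induction with
  | base => exact le_rfl
  | succ j _ ih => exact (CC_anti j hv).trans ih

lemma CC_cosh (d : ℝ) : CC 0 (d ^ 2) = Real.cosh d := by
  rw [← (Real.hasSum_cosh d).tsum_eq]
  refine tsum_congr fun k => ?_
  rw [cc_zero, ← pow_mul]
  ring

lemma CC_cos (d : ℝ) : CC 0 (-d ^ 2) = Real.cos d := by
  rw [← (Real.hasSum_cos d).tsum_eq]
  refine tsum_congr fun k => ?_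
  rw [cc_zero, neg_pow, ← pow_mul]
  ring

lemma cc_one (k : ℕ) : 2 * cc 1 k = 1 / (Nat.factorial (2 * k + 1) : ℝ) := by
  have h := cc_rec 0 k
  rw [cc_zero] at h
  rw [Nat.factorial_succ]
  push_cast at h ⊢
  have : (0 : ℝ) < Nat.factorial (2 * k) := by positivity
  have h3 : (0 : ℝ) < 2 * k + 1 := by positivity
  field_simp at h ⊢
  linarith

lemma CC_sinh (d : ℝ) : 2 * d * CC 1 (d ^ 2) = Real.sinh d := by
  rw [← (Real.hasSum_sinh d).tsum_eq, CC, ← tsum_mul_left]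
  refine tsum_congr fun k => ?_
  rw [show 2 * d * (cc 1 k * (d ^ 2) ^ k) = (2 * cc 1 k) * (d * (d ^ 2) ^ k) by ring, cc_one,
    ← pow_mul]
  ring

lemma CC_sin (d : ℝ) : 2 * d * CC 1 (-d ^ 2) = Real.sin d := by
  rw [← (Real.hasSum_sin d).tsum_eq, CC, ← tsum_mul_left]
  refine tsum_congr fun k => ?_
  rw [show 2 * d * (cc 1 k * (-d ^ 2) ^ k) = (2 * cc 1 k) * (d * (-d ^ 2) ^ k) by ring, cc_one,
    neg_pow, ← pow_mul]
  ring

lemma CC_ode (j : ℕ) (v : ℝ) :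
    4 * v * CC (j + 2) v + (4 * j + 2) * CC (j + 1) v = CC j v := by
  have h1 : HasSum (fun k : ℕ => 4 * (k : ℝ) * (cc (j + 1) k * v ^ k)) (4 * v * CC (j + 2) v) := by
    rw [← hasSum_nat_add_iff' 1]
    simp only [Finset.range_one, Finset.sum_singleton, Nat.cast_zero, mul_zero, zero_mul, sub_zero]
    convert! (summable_CC (j + 2) v).hasSum.mul_left (4 * v) using 2 with k
    rw [← cc_succ (j + 1) k]
    push_cast
    ring
  have h2 := (summable_CC (j + 1) v).hasSum.mul_left (4 * (j : ℝ) + 2)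
  have h3 := h1.add h2
  have h4 := (summable_CC j v).hasSum
  refine h3.unique ?_
  have e : (fun b : ℕ => 4 * (b : ℝ) * (cc (j + 1) b * v ^ b) +
      (4 * (j : ℝ) + 2) * (cc (j + 1) b * v ^ b)) = fun k => cc j k * v ^ k := by
    funext k
    rw [← cc_rec j k]
    ring
  rw [e]
  exact h4

lemma hasDerivAt_CC (j : ℕ) (v : ℝ) : HasDerivAt (CC j) (CC (j + 1) v) v := by
  set R : ℝ := |v| + 1 with hR
  have hv : v ∈ Metric.ball (0 : ℝ) R := by
    simp [hR]
  have key : ∀ k : ℕ, ((k + 1 : ℕ) : ℝ) * v ^ k * cc j (k + 1) = cc (j + 1) k * v ^ k := by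
    intro k
    rw [← cc_succ]; push_cast; ring
  have hu : Summable (fun k : ℕ => cc j k * (k * R ^ (k - 1))) := by
    rw [← summable_nat_add_iff 1]
    convert! summable_CC (j + 1) R using 2 with k
    rw [← cc_succ]
    push_cast
    ring
  have := hasDerivAt_tsum_of_isPreconnected (g := fun k (v : ℝ) => cc j k * v ^ k)
    (g' := fun k (v : ℝ) => cc j k * (k * v ^ (k - 1))) hu Metric.isOpen_ball
    (convex_ball (0 : ℝ) R).isPreconnected (fun n y _ => (hasDerivAt_pow n y).const_mul _)
    (fun n y hy => ?_) hv (summable_CC j v) hv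
  · convert! this using 1
    symm
    have h0 : Summable (fun k : ℕ => cc j k * (k * v ^ (k - 1))) := by
      rw [← summable_nat_add_iff 1]
      convert! summable_CC (j + 1) v using 2 with k
      rw [← cc_succ]
      push_cast
      ring
    rw [h0.tsum_eq_zero_add]
    simp only [Nat.cast_zero, zero_mul, mul_zero, zero_add]
    refine tsum_congr fun k => ?_
    rw [← cc_succ]
    push_cast
    ring
  · have hy' : |y| ≤ R := by
      have := Metric.mem_ball.1 hy
      rw [Real.dist_eq, sub_zero] at this
      exact this.le
    rw [norm_mul, norm_mul, norm_pow, Real.norm_eq_abs, Real.norm_eq_abs, Real.norm_eq_abs,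
      abs_of_pos (cc_pos j n), Nat.abs_cast]
    have := (cc_pos j n).le
    gcongr

/-- All derivatives of `v ↦ cosh √v` are bounded on the negative axis. -/
lemma CC_neg_bounded (j : ℕ) : ∃ B : ℝ, 0 < B ∧ ∀ w : ℝ, 0 ≤ w → |CC j (-w)| ≤ B := by
  suffices h : (∃ B : ℝ, 0 < B ∧ ∀ w : ℝ, 0 ≤ w → |CC j (-w)| ≤ B) ∧
      (∃ B : ℝ, 0 < B ∧ ∀ w : ℝ, 0 ≤ w → |CC (j + 1) (-w)| ≤ B) from h.1
  have small : ∀ j (w : ℝ), 0 ≤ w → w ≤ 1 → |CC j (-w)| ≤ CC 0 1 := by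
    intro j w h0 h1
    refine (abs_CC_le j (-w)).trans ?_
    rw [abs_neg, abs_of_nonneg h0]
    exact CC_zero_mono h0 h1
  have hp : 0 < CC 0 1 := CC_pos 0 zero_le_one
  induction j with
  | zero =>
    refine ⟨⟨1, one_pos, fun w hw => ?_⟩, ⟨CC 0 1 + 1, by positivity, fun w hw => ?_⟩⟩
    · have := CC_cos (√w)
      rw [Real.sq_sqrt hw] at this
      rw [this]
      exact Real.abs_cos_le_one _
    · rcases le_total w 1 with h | h
      · linarith [small 1 w hw h]
      · have h1 := CC_sin (√w)
        rw [Real.sq_sqrt hw] at h1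
        have h2 : 1 ≤ √w := Real.one_le_sqrt.2 h
        have h3 := Real.abs_sin_le_one (√w)
        rw [← h1, abs_mul, abs_of_pos (by positivity)] at h3
        have h4 := abs_nonneg (CC 1 (-w))
        simp only [zero_add]
        nlinarith
  | succ j ih =>
    obtain ⟨⟨B0, hB0, h0⟩, ⟨B1, hB1, h1⟩⟩ := ih
    refine ⟨⟨B1, hB1, h1⟩, ⟨CC 0 1 + (B0 + (4 * j + 2) * B1), by positivity, fun w hw => ?_⟩⟩
    rcases le_total w 1 with h | h
    · have := small (j + 1 + 1) w hw h
      have : 0 ≤ B0 + (4 * j + 2) * B1 := by positivity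
      linarith
    · have ho := CC_ode j (-w)
      have e : 4 * w * CC (j + 2) (-w) = (4 * j + 2) * CC (j + 1) (-w) - CC j (-w) := by
        linarith
      have e2 : 4 * w * |CC (j + 2) (-w)| ≤ (4 * j + 2) * B1 + B0 := by
        have : |4 * w * CC (j + 2) (-w)| ≤ (4 * j + 2) * B1 + B0 := by
          rw [e]
          refine (abs_sub _ _).trans ?_
          rw [abs_mul, abs_of_pos (by positivity : (0 : ℝ) < 4 * j + 2)]
          gcongr
          · exact h1 w hw
          · exact h0 w hw
        rwa [abs_mul, abs_of_pos (by positivity)] at this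
      have h4 := abs_nonneg (CC (j + 2) (-w))
      show |CC (j + 2) (-w)| ≤ _
      nlinarith

/-- General term of the differentiated theta series. -/
noncomputable def tm (c d : ℝ) (j : ℕ) (n : ℤ) (u : ℝ) : ℝ :=
  Real.exp (-c * (n : ℝ) ^ 2) * (d * (n : ℝ) ^ 2) ^ j * CC j (d * (n : ℝ) ^ 2 * u)

/-- Differentiated theta series. -/
noncomputable def FF (c d : ℝ) (j : ℕ) (u : ℝ) : ℝ := ∑' n : ℤ, tm c d j n u

noncomputable def bnd (c d : ℝ) (j : ℕ) (R : ℝ) (n : ℤ) : ℝ :=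
  |d| ^ j * ((|n| ^ (2 * j) : ℝ) *
    Real.exp (-π * ((c / π) * n ^ 2 - 2 * (√(|d| * R) / (2 * π)) * |n|)))

lemma summable_bnd {c : ℝ} (hc : 0 < c) (d : ℝ) (j : ℕ) (R : ℝ) : Summable (bnd c d j R) :=
  (summable_pow_mul_jacobiTheta₂_term_bound (√(|d| * R) / (2 * π))
    (div_pos hc Real.pi_pos) (2 * j)).mul_left _

lemma abs_tm_le (c d : ℝ) (j : ℕ) {R u : ℝ} (n : ℤ) (hu : |u| ≤ R) :
    |tm c d j n u| ≤ bnd c d j R n := by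
  have hR : 0 ≤ R := (abs_nonneg u).trans hu
  have h1 : |CC j (d * (n : ℝ) ^ 2 * u)| ≤ Real.exp (√(|d| * R) * |(n : ℝ)|) := by
    refine (abs_CC_le _ _).trans ?_
    have e : (√(|d| * R) * |(n : ℝ)|) ^ 2 = |d| * R * (n : ℝ) ^ 2 := by
      rw [mul_pow, Real.sq_sqrt (by positivity), sq_abs]
    have : |d * (n : ℝ) ^ 2 * u| ≤ (√(|d| * R) * |(n : ℝ)|) ^ 2 := by
      rw [e, abs_mul, abs_mul, abs_of_nonneg (sq_nonneg (n : ℝ))]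
      calc |d| * (n : ℝ) ^ 2 * |u| ≤ |d| * (n : ℝ) ^ 2 * R := by gcongr
        _ = _ := by ring
    refine (CC_zero_mono (abs_nonneg _) this).trans ?_
    rw [CC_cosh, Real.cosh_eq]
    have h0 : 0 ≤ √(|d| * R) * |(n : ℝ)| := by positivity
    have := Real.exp_le_exp.2 (by linarith : -(√(|d| * R) * |(n : ℝ)|) ≤ √(|d| * R) * |(n : ℝ)|)
    linarith
  have e2 : bnd c d j R n = Real.exp (-c * (n : ℝ) ^ 2) * (|d| * (n : ℝ) ^ 2) ^ j *
      Real.exp (√(|d| * R) * |(n : ℝ)|) := by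
    unfold bnd
    have : -π * ((c / π) * (n : ℝ) ^ 2 - 2 * (√(|d| * R) / (2 * π)) * |(n : ℝ)|) =
        -c * (n : ℝ) ^ 2 + √(|d| * R) * |(n : ℝ)| := by
      have := Real.pi_pos
      field_simp
      ring
    have h3 : (|(n : ℝ)|) ^ (2 * j) = ((n : ℝ) ^ 2) ^ j := by
      rw [pow_mul, sq_abs]
    push_cast
    rw [this, Real.exp_add, h3, mul_pow]
    ring
  rw [e2, tm, abs_mul, abs_mul, abs_of_pos (Real.exp_pos _), abs_pow, abs_mul,
    abs_of_nonneg (sq_nonneg (n : ℝ))]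
  gcongr

lemma summable_tm {c : ℝ} (hc : 0 < c) (d : ℝ) (j : ℕ) (u : ℝ) :
    Summable fun n : ℤ => tm c d j n u :=
  Summable.of_norm_bounded (summable_bnd hc d j |u|) fun n => abs_tm_le c d j n le_rfl

lemma hasDerivAt_tm (c d : ℝ) (j : ℕ) (n : ℤ) (u : ℝ) :
    HasDerivAt (tm c d j n) (tm c d (j + 1) n u) u := by
  have h1 : HasDerivAt (fun u : ℝ => d * (n : ℝ) ^ 2 * u) (d * (n : ℝ) ^ 2) u := by
    simpa using (hasDerivAt_id u).const_mul (d * (n : ℝ) ^ 2)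
  have h2 := ((hasDerivAt_CC j (d * (n : ℝ) ^ 2 * u)).comp u h1).const_mul
    (Real.exp (-c * (n : ℝ) ^ 2) * (d * (n : ℝ) ^ 2) ^ j)
  refine h2.congr_deriv ?_
  unfold tm
  ring

lemma hasDerivAt_FF {c : ℝ} (hc : 0 < c) (d : ℝ) (j : ℕ) (u : ℝ) :
    HasDerivAt (FF c d j) (FF c d (j + 1) u) u := by
  have hv : u ∈ Metric.ball (0 : ℝ) (|u| + 1) := by simp
  refine hasDerivAt_tsum_of_isPreconnected (g := fun n u => tm c d j n u)
    (g' := fun n u => tm c d (j + 1) n u) (summable_bnd hc d (j + 1) (|u| + 1)) Metric.isOpen_ball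
    (convex_ball (0 : ℝ) (|u| + 1)).isPreconnected (fun n y _ => hasDerivAt_tm c d j n y)
    (fun n y hy => ?_) hv (summable_tm hc d j u) hv
  have := Metric.mem_ball.1 hy
  rw [Real.dist_eq, sub_zero] at this
  exact abs_tm_le c d (j + 1) n this.le

lemma summable_gauss_lin {t : ℝ} (ht : 0 < t) (δ : ℝ) :
    Summable fun n : ℤ => Real.exp (-t * (n : ℝ) ^ 2 + δ * n) := by
  have h := summable_pow_mul_jacobiTheta₂_term_bound (|δ| / (2 * π)) (div_pos ht Real.pi_pos) 0
  refine Summable.of_norm_bounded h fun n => ?_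
  rw [Real.norm_eq_abs, abs_of_pos (Real.exp_pos _), pow_zero, one_mul, Real.exp_le_exp]
  have : -π * ((t / π) * (n : ℝ) ^ 2 - 2 * (|δ| / (2 * π)) * |(n : ℝ)|) =
        -t * (n : ℝ) ^ 2 + |δ| * |(n : ℝ)| := by
    have := Real.pi_pos
    field_simp
    ring
  push_cast
  rw [this, ← abs_mul]
  gcongr
  exact le_abs_self _

lemma poisson_real {t : ℝ} (ht : 0 < t) (δ : ℝ) :
    ∑' n : ℤ, Real.exp (-t * (n : ℝ) ^ 2 + δ * n) =
      √(π / t) * ∑' n : ℤ, Real.exp (δ ^ 2 / (4 * t)) *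
        (Real.exp (-(π ^ 2 / t) * (n : ℝ) ^ 2) * Real.cos (π * n * δ / t)) := by
  have hπ := Real.pi_pos
  have hπc : (π : ℂ) ≠ 0 := by exact_mod_cast hπ.ne'
  have htc : (t : ℂ) ≠ 0 := by exact_mod_cast ht.ne'
  have ha : 0 < ((t / π : ℝ) : ℂ).re := by
    rw [Complex.ofReal_re]; positivity
  have h := Complex.tsum_exp_neg_quadratic ha ((δ / (2 * π) : ℝ) : ℂ)
  have hl : ∀ n : ℤ, Complex.exp (-π * ((t / π : ℝ) : ℂ) * n ^ 2 +
      2 * π * ((δ / (2 * π) : ℝ) : ℂ) * n) =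
      ((Real.exp (-t * (n : ℝ) ^ 2 + δ * n) : ℝ) : ℂ) := by
    intro n
    push_cast
    congr 1
    field_simp
  have hre : ∀ n : ℤ, Complex.exp (-π / ((t / π : ℝ) : ℂ) *
      (n + Complex.I * ((δ / (2 * π) : ℝ) : ℂ)) ^ 2) =
      Complex.exp (((δ ^ 2 / (4 * t) + -(π ^ 2 / t) * (n : ℝ) ^ 2 : ℝ) : ℂ) +
        ((-(π * n * δ / t) : ℝ) : ℂ) * Complex.I) := by
    intro n
    congr 1
    push_cast
    field_simp
    ring_nf
    rw [Complex.I_sq]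
    ring
  simp_rw [hl, hre] at h
  have hs : Summable fun n : ℤ => Complex.exp (((δ ^ 2 / (4 * t) +
      -(π ^ 2 / t) * (n : ℝ) ^ 2 : ℝ) : ℂ) + ((-(π * n * δ / t) : ℝ) : ℂ) * Complex.I) := by
    have := (summable_gauss_lin (t := π ^ 2 / t) (by positivity) 0).mul_left
      (Real.exp (δ ^ 2 / (4 * t)))
    refine Summable.of_norm_bounded this fun n => ?_
    rw [Complex.norm_exp, ← Real.exp_add]
    rw [Complex.add_re, Complex.re_ofReal_mul, Complex.ofReal_re, Complex.I_re, mul_zero, zero_mul,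
      add_zero, add_zero]
  have hc : (1 : ℂ) / ((t / π : ℝ) : ℂ) ^ (1 / 2 : ℂ) = ((√(π / t) : ℝ) : ℂ) := by
    have : (1 / 2 : ℂ) = ((1 / 2 : ℝ) : ℂ) := by push_cast; rfl
    rw [this, ← Complex.ofReal_cpow (by positivity), ← Real.sqrt_eq_rpow]
    rw [show π / t = (t / π)⁻¹ by rw [inv_div], Real.sqrt_inv]
    push_cast
    rw [one_div]
  rw [hc, ← Complex.ofReal_tsum] at h
  have h2 := congrArg Complex.re h
  rw [Complex.ofReal_re, Complex.re_ofReal_mul, Complex.re_tsum hs] at h2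
  rw [h2]
  congr 1
  refine tsum_congr fun n => ?_
  rw [Complex.exp_re]
  have e1 : (((δ ^ 2 / (4 * t) + -(π ^ 2 / t) * (n : ℝ) ^ 2 : ℝ) : ℂ) +
      ((-(π * n * δ / t) : ℝ) : ℂ) * Complex.I).re =
      δ ^ 2 / (4 * t) + -(π ^ 2 / t) * (n : ℝ) ^ 2 := by
    rw [Complex.add_re, Complex.re_ofReal_mul, Complex.ofReal_re, Complex.I_re]; ring
  have e2 : (((δ ^ 2 / (4 * t) + -(π ^ 2 / t) * (n : ℝ) ^ 2 : ℝ) : ℂ) +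
      ((-(π * n * δ / t) : ℝ) : ℂ) * Complex.I).im = -(π * n * δ / t) := by
    rw [Complex.add_im, Complex.im_ofReal_mul, Complex.ofReal_im, Complex.I_im]; ring
  rw [e1, e2, Real.cos_neg, Real.exp_add, mul_assoc]

lemma poisson_FF {t : ℝ} (ht : 0 < t) {u : ℝ} (hu : 0 ≤ u) :
    FF t 1 0 u = √(π / t) * (Real.exp (1 / (4 * t) * u) * FF (π ^ 2 / t) (-(π ^ 2 / t ^ 2)) 0 u) := by
  obtain ⟨δ, rfl⟩ : ∃ δ : ℝ, δ ^ 2 = u := ⟨√u, Real.sq_sqrt hu⟩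
  have h := poisson_real ht δ
  have e1 : FF t 1 0 (δ ^ 2) = ∑' n : ℤ, Real.exp (-t * (n : ℝ) ^ 2 + δ * n) := by
    have hs := summable_gauss_lin ht δ
    have hs' := summable_gauss_lin ht (-δ)
    have e : ∑' n : ℤ, Real.exp (-t * (n : ℝ) ^ 2 + (-δ) * n) =
        ∑' n : ℤ, Real.exp (-t * (n : ℝ) ^ 2 + δ * n) := by
      rw [← tsum_comp_neg]
      refine tsum_congr fun n => ?_
      push_cast
      congr 1
      ring
    have h2 := (hs.hasSum.add hs'.hasSum).div_const 2
    rw [e, add_self_div_two] at h2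
    rw [← h2.tsum_eq, FF]
    refine tsum_congr fun n => ?_
    rw [tm, pow_zero, mul_one, show 1 * (n : ℝ) ^ 2 * δ ^ 2 = (n * δ) ^ 2 by ring, CC_cosh,
      Real.cosh_eq, Real.exp_add, Real.exp_add, mul_comm δ, show -δ * n = -(n * δ) by ring]
    ring
  rw [e1, h, tsum_mul_left, show 1 / (4 * t) * δ ^ 2 = δ ^ 2 / (4 * t) by ring]
  congr 2
  refine tsum_congr fun n => ?_
  rw [tm, pow_zero, mul_one,
    show -(π ^ 2 / t ^ 2) * (n : ℝ) ^ 2 * δ ^ 2 = -(π * n * δ / t) ^ 2 by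
      field_simp, CC_cos]

/-- The family `(σ + ∂)^j H_i`. -/
noncomputable def KK (σ : ℝ) (H : ℕ → ℝ → ℝ) : ℕ → ℕ → ℝ → ℝ
  | 0, i, u => H i u
  | j + 1, i, u => σ * KK σ H j i u + KK σ H j (i + 1) u

lemma hasDerivAt_KK {σ : ℝ} {H : ℕ → ℝ → ℝ} (hH : ∀ i u, HasDerivAt (H i) (H (i + 1) u) u)
    (j i : ℕ) (u : ℝ) : HasDerivAt (KK σ H j i) (KK σ H j (i + 1) u) u := by
  induction j generalizing i with
  | zero => exact hH i u
  | succ j ih => exact ((ih i).const_mul σ).add (ih (i + 1))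

lemma FF_eq_KK {t : ℝ} (ht : 0 < t) (j : ℕ) : ∀ u : ℝ, 0 < u →
    FF t 1 j u = √(π / t) * (Real.exp (1 / (4 * t) * u) *
      KK (1 / (4 * t)) (FF (π ^ 2 / t) (-(π ^ 2 / t ^ 2))) j 0 u) := by
  induction j with
  | zero => exact fun u hu => poisson_FF ht hu.le
  | succ j ih =>
    intro u hu
    have hc : 0 < π ^ 2 / t := by have := Real.pi_pos; positivity
    have h1 := hasDerivAt_FF ht 1 j u
    have hk := hasDerivAt_KK (σ := 1 / (4 * t))
      (fun i u => hasDerivAt_FF hc (-(π ^ 2 / t ^ 2)) i u) j 0 u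
    have he : HasDerivAt (fun u : ℝ => Real.exp (1 / (4 * t) * u))
        (Real.exp (1 / (4 * t) * u) * (1 / (4 * t))) u := by
      have := ((hasDerivAt_id u).const_mul (1 / (4 * t))).exp
      simpa using this
    have h2 := (he.mul hk).const_mul (√(π / t))
    have h3 := h1.unique (h2.congr_of_eventuallyEq ?_)
    · rw [h3, KK]
      ring
    · filter_upwards [lt_mem_nhds hu] with y hy
      exact ih y hy

/-- Gegenbauer polynomial `C_m^{l+1}`. -/
noncomputable def gp (l m : ℕ) : Polynomial ℝ :=
  ∑ j ∈ Finset.range (m / 2 + 1),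
    Polynomial.C ((-1 : ℝ) ^ j * (Nat.factorial (m - j + l)) /
      ((Nat.factorial l) * (Nat.factorial j) * (Nat.factorial (m - 2 * j)))) *
        (2 * Polynomial.X) ^ (m - 2 * j)

lemma gp_eval (m : ℕ) (x : ℝ) : (gp 4 m).eval x = geg5 m x := by
  unfold gp geg5
  rw [Polynomial.eval_finsetSum]
  simp

lemma gp_deriv_term (l m j : ℕ) (hj : 2 * j ≤ m) :
    Polynomial.derivative (Polynomial.C ((-1 : ℝ) ^ j * (Nat.factorial (m + 1 - j + l)) /
      ((Nat.factorial l) * (Nat.factorial j) * (Nat.factorial (m + 1 - 2 * j)))) *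
        (2 * Polynomial.X) ^ (m + 1 - 2 * j)) =
    Polynomial.C (2 * ((l : ℝ) + 1)) *
    (Polynomial.C ((-1 : ℝ) ^ j * (Nat.factorial (m - j + (l + 1))) /
      ((Nat.factorial (l + 1)) * (Nat.factorial j) * (Nat.factorial (m - 2 * j)))) *
        (2 * Polynomial.X) ^ (m - 2 * j)) := by
  obtain ⟨k, rfl⟩ := Nat.exists_eq_add_of_le hj
  rw [show 2 * j + k + 1 - 2 * j = k + 1 by omega, show 2 * j + k - 2 * j = k by omega,
    show 2 * j + k + 1 - j + l = j + k + (l + 1) by omega,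
    show 2 * j + k - j + (l + 1) = j + k + (l + 1) by omega]
  rw [Polynomial.derivative_C_mul, Polynomial.derivative_pow_succ, ← mul_assoc (Polynomial.C (2 * ((l : ℝ) + 1))),
    ← Polynomial.C_mul]
  have h2 : Polynomial.derivative (2 * Polynomial.X : Polynomial ℝ) = Polynomial.C 2 := by
    rw [Polynomial.derivative_mul]
    simp
    rfl
  have e : ((-1 : ℝ) ^ j * (Nat.factorial (j + k + (l + 1))) /
      ((Nat.factorial l) * (Nat.factorial j) * (Nat.factorial (k + 1)))) * ((k : ℝ) + 1) * 2 =
      2 * ((l : ℝ) + 1) * ((-1 : ℝ) ^ j * (Nat.factorial (j + k + (l + 1))) /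
      ((Nat.factorial (l + 1)) * (Nat.factorial j) * (Nat.factorial k))) := by
    rw [Nat.factorial_succ k, Nat.factorial_succ l]
    push_cast
    field_simp
  rw [h2, ← e]
  simp only [Polynomial.C_mul, Polynomial.C_add, Polynomial.C_1, map_natCast]
  ring

lemma gp_deriv (l m : ℕ) : Polynomial.derivative (gp l (m + 1)) =
    Polynomial.C (2 * ((l : ℝ) + 1)) * gp (l + 1) m := by
  have key : Polynomial.derivative (gp l (m + 1)) = ∑ j ∈ Finset.range (m / 2 + 1),
      Polynomial.derivative (Polynomial.C ((-1 : ℝ) ^ j * (Nat.factorial (m + 1 - j + l)) /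
      ((Nat.factorial l) * (Nat.factorial j) * (Nat.factorial (m + 1 - 2 * j)))) *
        (2 * Polynomial.X) ^ (m + 1 - 2 * j)) := by
    unfold gp
    rw [Polynomial.derivative_sum]
    rcases Nat.even_or_odd' m with ⟨k, rfl | rfl⟩
    · rw [show (2 * k + 1) / 2 = 2 * k / 2 by omega]
    · rw [show (2 * k + 1 + 1) / 2 = (2 * k + 1) / 2 + 1 by omega, Finset.sum_range_succ,
        show 2 * k + 1 + 1 - 2 * ((2 * k + 1) / 2 + 1) = 0 by omega]
      simp
  rw [key, gp, Finset.mul_sum]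
  refine Finset.sum_congr rfl fun j hj => gp_deriv_term l m j ?_
  have := Finset.mem_range.1 hj
  omega

/-- Binomial form of the Chebyshev polynomials of the second kind. -/
noncomputable def up (m : ℕ) : Polynomial ℝ :=
  ∑ j ∈ Finset.range (m + 1),
    (-1) ^ j * ((Nat.choose (m - j) j : ℕ) : Polynomial ℝ) * (2 * Polynomial.X) ^ (m - 2 * j)

lemma up_rec (m : ℕ) : up (m + 2) = 2 * Polynomial.X * up (m + 1) - up m := by
  unfold up
  rw [Finset.sum_range_succ, Finset.sum_range_succ' _ (m + 1)]
  rw [Finset.sum_range_succ' _ (m + 1), mul_add (2 * Polynomial.X), Finset.mul_sum]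
  have : ∀ i ∈ Finset.range (m + 1),
      ((-1) ^ (i + 1) * ((Nat.choose (m + 2 - (i + 1)) (i + 1) : ℕ) : Polynomial ℝ) *
        (2 * Polynomial.X) ^ (m + 2 - 2 * (i + 1))) =
      2 * Polynomial.X * ((-1) ^ (i + 1) * ((Nat.choose (m + 1 - (i + 1)) (i + 1) : ℕ) :
        Polynomial ℝ) * (2 * Polynomial.X) ^ (m + 1 - 2 * (i + 1))) -
      (-1) ^ i * ((Nat.choose (m - i) i : ℕ) : Polynomial ℝ) *
        (2 * Polynomial.X) ^ (m - 2 * i) := by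
    intro i hi
    have hi' := Finset.mem_range.1 hi
    rw [show m + 2 - (i + 1) = (m - i) + 1 by omega, show m + 1 - (i + 1) = m - i by omega,
      Nat.choose_succ_succ, show m + 2 - 2 * (i + 1) = m - 2 * i by omega]
    by_cases h : 2 * i + 1 ≤ m
    · rw [show m - 2 * i = (m + 1 - 2 * (i + 1)) + 1 by omega]
      push_cast
      ring
    · rw [Nat.choose_eq_zero_of_lt (show m - i < i + 1 by omega)]
      push_cast
      ring
  rw [Finset.sum_congr rfl this, Finset.sum_sub_distrib]
  simp only [Nat.choose_zero_succ, show m + 2 - (m + 1 + 1) = 0 by omega]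
  simp
  ring

lemma up_eq_U (m : ℕ) : up m = Polynomial.Chebyshev.U ℝ m := by
  induction m using Nat.twoStepInduction with
  | zero => simp [up]
  | one => simp [up, Finset.sum_range_succ]
  | more m h1 h2 =>
    rw [up_rec, h1, h2]
    push_cast
    rw [Polynomial.Chebyshev.U_add_two]

lemma gp_zero_eq_up (m : ℕ) : gp 0 m = up m := by
  unfold gp up
  have hsub : Finset.range (m / 2 + 1) ⊆ Finset.range (m + 1) := by
    intro j hj
    rw [Finset.mem_range] at hj ⊢
    omega
  rw [← Finset.sum_subset hsub]
  · refine Finset.sum_congr rfl fun j hj => ?_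
    have hj' := Finset.mem_range.1 hj
    have h := Nat.choose_eq_factorial_div_factorial (show j ≤ m - j by omega)
    have h2 : (Nat.choose (m - j) j : ℝ) =
        (Nat.factorial (m - j) : ℝ) / ((Nat.factorial j) * (Nat.factorial (m - 2 * j))) := by
      rw [Nat.cast_choose ℝ (show j ≤ m - j by omega), show m - j - j = m - 2 * j by omega]
    congr 1
    rw [← Polynomial.C_eq_natCast, h2, add_zero, Nat.factorial_zero, Nat.cast_one, one_mul,
      mul_div_assoc, Polynomial.C_mul]
    simp
  · intro j hj hj2
    rw [Finset.mem_range] at hj hj2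
    rw [Nat.choose_eq_zero_of_lt (by omega)]
    simp

lemma deriv5_T (m : ℕ) (x : ℝ) :
    ((Polynomial.derivative^[5]) (Polynomial.Chebyshev.T ℝ ((m + 5 : ℕ) : ℤ))).eval x =
      384 * ((m : ℝ) + 5) * geg5 m x := by
  rw [Function.iterate_succ_apply, Polynomial.Chebyshev.T_derivative_eq_U,
    show (((m + 5 : ℕ) : ℤ) - 1) = ((m + 4 : ℕ) : ℤ) by push_cast; ring, ← up_eq_U,
    ← gp_zero_eq_up]
  have hc : (((m + 5 : ℕ) : ℤ) : Polynomial ℝ) = Polynomial.C ((m : ℝ) + 5) := by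
    rw [show (m : ℝ) + 5 = ((m + 5 : ℕ) : ℝ) by push_cast; ring, Polynomial.C_eq_natCast,
      Int.cast_natCast]
  rw [hc, Polynomial.iterate_derivative_C_mul, Function.iterate_succ_apply, gp_deriv,
    Polynomial.iterate_derivative_C_mul, Function.iterate_succ_apply, gp_deriv,
    Polynomial.iterate_derivative_C_mul, Function.iterate_succ_apply, gp_deriv,
    Polynomial.iterate_derivative_C_mul, Function.iterate_succ_apply, gp_deriv,
    Function.iterate_zero_apply]
  simp only [Polynomial.eval_mul, Polynomial.eval_C]
  rw [show 0 + 1 + 1 + 1 + 1 = 4 by rfl, gp_eval]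
  push_cast
  ring

lemma deriv5_T_small (n : ℕ) (hn : n < 5) (x : ℝ) :
    ((Polynomial.derivative^[5]) (Polynomial.Chebyshev.T ℝ (n : ℤ))).eval x = 0 := by
  rw [Polynomial.iterate_derivative_eq_zero, Polynomial.eval_zero]
  rw [Polynomial.Chebyshev.natDegree_T]
  simpa using hn

/-- Faa di Bruno, solved for the fifth derivative. -/
lemma faa5 (Q : Polynomial ℝ) (E : ℕ → ℝ → ℝ) (hE : ∀ j u, HasDerivAt (E j) (E (j + 1) u) u)
    (h0 : ∀ u : ℝ, 0 < u → Q.eval (CC 0 u) = E 0 u) (u : ℝ) (hu : 0 < u)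
    (r1 r2 r3 r4 : ℝ) (h1 : CC 2 u = r1 * CC 1 u) (h2 : CC 3 u = r2 * CC 1 u)
    (h3 : CC 4 u = r3 * CC 1 u) (h4 : CC 5 u = r4 * CC 1 u) :
    CC 1 u ^ 5 * ((Polynomial.derivative^[5]) Q).eval (CC 0 u) =
      E 5 u + (-10 * r1) * E 4 u + (45 * r1 ^ 2 - 10 * r2) * E 3 u +
        (-105 * r1 ^ 3 + 60 * r1 * r2 - 5 * r3) * E 2 u +
        (105 * r1 ^ 4 - 105 * r1 ^ 2 * r2 + 15 * r1 * r3 + 10 * r2 ^ 2 - r4) * E 1 u := by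
  set q : ℕ → ℝ → ℝ := fun k u => ((Polynomial.derivative^[k]) Q).eval (CC 0 u) with hq
  have hqd : ∀ k u, HasDerivAt (q k) (q (k + 1) u * CC 1 u) u := by
    intro k u
    have := (Polynomial.hasDerivAt ((Polynomial.derivative^[k]) Q) (CC 0 u)).comp u
      (hasDerivAt_CC 0 u)
    rw [← Function.iterate_succ_apply' (Polynomial.derivative) k Q] at this
    exact this
  have step : ∀ (f : ℝ → ℝ) (f' : ℝ → ℝ) (j : ℕ), (∀ u, HasDerivAt f (f' u) u) →
      (∀ u : ℝ, 0 < u → f u = E j u) → ∀ u : ℝ, 0 < u → f' u = E (j + 1) u := by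
    intro f f' j hf hfe u hu
    refine (hf u).unique ((hE j u).congr_of_eventuallyEq ?_)
    filter_upwards [lt_mem_nhds hu] with y hy
    exact hfe y hy
  have c := hasDerivAt_CC
  have e1 := step (q 0) (fun u => q 1 u * CC 1 u) 0 (hqd 0) h0
  have e2 := step (fun u => q 1 u * CC 1 u) (fun u => q 2 u * CC 1 u ^ 2 + q 1 u * CC 2 u) 1
    (fun u => ((hqd 1 u).mul (c 1 u)).congr_deriv (by ring)) e1
  have e3 := step (fun u => q 2 u * CC 1 u ^ 2 + q 1 u * CC 2 u)
    (fun u => q 3 u * CC 1 u ^ 3 + 3 * (q 2 u * (CC 1 u * CC 2 u)) + q 1 u * CC 3 u) 2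
    (fun u => (((hqd 2 u).mul ((c 1 u).pow 2)).add ((hqd 1 u).mul (c 2 u))).congr_deriv
      (by simp; ring)) e2
  have e4 := step
    (fun u => q 3 u * CC 1 u ^ 3 + 3 * (q 2 u * (CC 1 u * CC 2 u)) + q 1 u * CC 3 u)
    (fun u => q 4 u * CC 1 u ^ 4 + 6 * (q 3 u * (CC 1 u ^ 2 * CC 2 u)) +
      q 2 u * (4 * (CC 1 u * CC 3 u) + 3 * CC 2 u ^ 2) + q 1 u * CC 4 u) 3
    (fun u => ((((hqd 3 u).mul ((c 1 u).pow 3)).add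
      (((hqd 2 u).mul ((c 1 u).mul (c 2 u))).const_mul 3)).add
      ((hqd 1 u).mul (c 3 u))).congr_deriv (by simp; ring)) e3
  have e5 := step
    (fun u => q 4 u * CC 1 u ^ 4 + 6 * (q 3 u * (CC 1 u ^ 2 * CC 2 u)) +
      q 2 u * (4 * (CC 1 u * CC 3 u) + 3 * CC 2 u ^ 2) + q 1 u * CC 4 u)
    (fun u => q 5 u * CC 1 u ^ 5 + 10 * (q 4 u * (CC 1 u ^ 3 * CC 2 u)) +
      q 3 u * (10 * (CC 1 u ^ 2 * CC 3 u) + 15 * (CC 1 u * CC 2 u ^ 2)) +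
      q 2 u * (5 * (CC 1 u * CC 4 u) + 10 * (CC 2 u * CC 3 u)) + q 1 u * CC 5 u) 4
    (fun u => (((((hqd 4 u).mul ((c 1 u).pow 4)).add
      (((hqd 3 u).mul (((c 1 u).pow 2).mul (c 2 u))).const_mul 6)).add
      ((hqd 2 u).mul ((((c 1 u).mul (c 3 u)).const_mul 4).add (((c 2 u).pow 2).const_mul 3)))).add
      ((hqd 1 u).mul (c 4 u))).congr_deriv (by simp; ring)) e4
  rw [← e5 u hu, ← e4 u hu, ← e3 u hu, ← e2 u hu, ← e1 u hu]
  simp only [h1, h2, h3, h4]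
  show CC 1 u ^ 5 * q 5 u = _
  ring

lemma tsum_T5 {t : ℝ} (ht : 0 < t) {u : ℝ} (hu : 0 < u) (r1 r2 r3 r4 : ℝ)
    (h1 : CC 2 u = r1 * CC 1 u) (h2 : CC 3 u = r2 * CC 1 u)
    (h3 : CC 4 u = r3 * CC 1 u) (h4 : CC 5 u = r4 * CC 1 u) :
    CC 1 u ^ 5 * (2 * (384 * Real.exp (-25 * t)) *
      ∑' m : ℕ, (m + 5) * Real.exp (-((m * (m + 10) : ℕ) : ℝ) * t) * geg5 m (CC 0 u)) =
      FF t 1 5 u + (-10 * r1) * FF t 1 4 u + (45 * r1 ^ 2 - 10 * r2) * FF t 1 3 u +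
        (-105 * r1 ^ 3 + 60 * r1 * r2 - 5 * r3) * FF t 1 2 u +
        (105 * r1 ^ 4 - 105 * r1 ^ 2 * r2 + 15 * r1 * r3 + 10 * r2 ^ 2 - r4) * FF t 1 1 u := by
  set W : ℤ → ℝ := fun n => Real.exp (-t * (n : ℝ) ^ 2) *
    ((Polynomial.derivative^[5]) (Polynomial.Chebyshev.T ℝ n)).eval (CC 0 u) with hW
  have hs := CC_pos 1 hu.le
  have hterm : ∀ n : ℤ, CC 1 u ^ 5 * W n =
      tm t 1 5 n u + (-10 * r1) * tm t 1 4 n u + (45 * r1 ^ 2 - 10 * r2) * tm t 1 3 n u +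
        (-105 * r1 ^ 3 + 60 * r1 * r2 - 5 * r3) * tm t 1 2 n u +
        (105 * r1 ^ 4 - 105 * r1 ^ 2 * r2 + 15 * r1 * r3 + 10 * r2 ^ 2 - r4) * tm t 1 1 n u := by
    intro n
    have := faa5 (Polynomial.C (Real.exp (-t * (n : ℝ) ^ 2)) * Polynomial.Chebyshev.T ℝ n)
      (fun j u => tm t 1 j n u) (fun j u => hasDerivAt_tm t 1 j n u) (fun u hu => ?_) u hu
      r1 r2 r3 r4 h1 h2 h3 h4
    · rw [← this, Polynomial.iterate_derivative_C_mul, Polynomial.eval_mul, Polynomial.eval_C]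
    · obtain ⟨δ, rfl⟩ : ∃ δ : ℝ, δ ^ 2 = u := ⟨√u, Real.sq_sqrt hu.le⟩
      rw [Polynomial.eval_mul, Polynomial.eval_C, CC_cosh, tm, pow_zero, mul_one,
        show 1 * (n : ℝ) ^ 2 * δ ^ 2 = (n * δ) ^ 2 by ring, CC_cosh,
        Polynomial.Chebyshev.T_real_cosh]
  have hsum : HasSum (fun n : ℤ => CC 1 u ^ 5 * W n)
      (FF t 1 5 u + (-10 * r1) * FF t 1 4 u + (45 * r1 ^ 2 - 10 * r2) * FF t 1 3 u +
        (-105 * r1 ^ 3 + 60 * r1 * r2 - 5 * r3) * FF t 1 2 u +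
        (105 * r1 ^ 4 - 105 * r1 ^ 2 * r2 + 15 * r1 * r3 + 10 * r2 ^ 2 - r4) * FF t 1 1 u) := by
    simp_rw [hterm]
    have S := fun j => (summable_tm ht 1 j u).hasSum
    exact (((((S 5).add ((S 4).mul_left _)).add ((S 3).mul_left _)).add ((S 2).mul_left _)).add
      ((S 1).mul_left _))
  have hWs : Summable W := (summable_mul_left_iff (by positivity)).1 hsum.summable
  have hWe : W.Even := by
    intro n
    simp only [hW, Polynomial.Chebyshev.T_neg]
    push_cast
    rw [neg_sq]
  have hW0 : ∀ n : ℕ, n < 5 → W n = 0 := by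
    intro n hn
    simp only [hW, deriv5_T_small n hn, mul_zero]
  have hWZ : ∑' n : ℤ, W n = 2 * ∑' m : ℕ, W ((m + 5 : ℕ) : ℤ) := by
    rw [tsum_int_eq_zero_add_two_mul_tsum_pnat hWe hWs]
    have h0 : W 0 = 0 := hW0 0 (by norm_num)
    rw [h0, zero_add]
    have hp := tsum_pnat_eq_tsum_succ (f := fun n : ℕ => W n)
    rw [hp]
    have hn : Summable (fun n : ℕ => W ((n + 1 : ℕ) : ℤ)) :=
      hWs.comp_injective (i := fun n : ℕ => ((n + 1 : ℕ) : ℤ)) (fun a b h => by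
        simpa using h)
    have := hn.sum_add_tsum_nat_add 4
    rw [← this]
    simp only [Finset.sum_range_succ, Finset.sum_range_zero]
    rw [hW0 _ (by norm_num), hW0 _ (by norm_num), hW0 _ (by norm_num), hW0 _ (by norm_num)]
    simp only [add_zero, zero_add, add_assoc]
    norm_num
  have hterm2 : ∀ m : ℕ, W ((m + 5 : ℕ) : ℤ) = 384 * Real.exp (-25 * t) *
      ((m + 5) * Real.exp (-((m * (m + 10) : ℕ) : ℝ) * t) * geg5 m (CC 0 u)) := by
    intro m
    simp only [hW]
    rw [deriv5_T]
    have : -t * ((((m + 5 : ℕ) : ℤ)) : ℝ) ^ 2 = -25 * t + -((m * (m + 10) : ℕ) : ℝ) * t := by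
      push_cast
      ring
    rw [this, Real.exp_add]
    ring
  rw [← hsum.tsum_eq, tsum_mul_left, hWZ]
  simp_rw [hterm2]
  rw [tsum_mul_left]
  ring

lemma FF_err (i : ℕ) : ∃ K : ℝ, 0 < K ∧ ∀ t : ℝ, 0 < t → ∀ u : ℝ, 0 ≤ u →
    |FF (π ^ 2 / t) (-(π ^ 2 / t ^ 2)) i u - (if i = 0 then 1 else 0)| ≤ K * t ^ 2 := by
  obtain ⟨B, hB, hBb⟩ := CC_neg_bounded i
  have hsum : Summable fun n : ℤ => 1 / (n : ℝ) ^ 2 :=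
    Real.summable_one_div_int_pow.2 (by norm_num)
  have hpos : 0 ≤ ∑' n : ℤ, 1 / (n : ℝ) ^ 2 := tsum_nonneg fun n => by positivity
  refine ⟨B * (Nat.factorial (2 * i + 2)) * (∑' n : ℤ, 1 / (n : ℝ) ^ 2 + 1), by positivity,
    fun t ht u hu => ?_⟩
  have hπ := Real.pi_pos
  have hc : 0 < π ^ 2 / t := by positivity
  have h1 := (summable_tm hc (-(π ^ 2 / t ^ 2)) i u).hasSum
  have h2 : HasSum (fun n : ℤ => if n = 0 then (if i = 0 then (1 : ℝ) else 0) else 0)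
      (if i = 0 then (1 : ℝ) else 0) := hasSum_ite_eq 0 _
  have h3 := h1.sub h2
  have h4 := hsum.hasSum.mul_left (B * (Nat.factorial (2 * i + 2)) * t ^ 2)
  have h5 := tsum_of_norm_bounded h4 (f := fun n : ℤ => tm (π ^ 2 / t) (-(π ^ 2 / t ^ 2)) i n u -
    if n = 0 then (if i = 0 then (1 : ℝ) else 0) else 0) ?_
  · rw [h3.tsum_eq] at h5
    refine h5.trans ?_
    have : 0 ≤ B * (Nat.factorial (2 * i + 2)) * t ^ 2 := by positivity
    nlinarith
  · intro n
    by_cases hn : n = 0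
    · subst hn
      have hC : CC 0 0 = 1 := by
        have := CC_cosh 0
        simpa using this
      rcases Nat.eq_zero_or_pos i with hi | hi
      · subst hi
        simp [tm, hC]
      · simp [tm, hi.ne']
    · rw [if_neg hn, sub_zero, Real.norm_eq_abs, tm]
      have hn1 : (1 : ℝ) ≤ (n : ℝ) ^ 2 := by
        have : 1 ≤ n ^ 2 := by
          have := sq_pos_of_ne_zero hn
          omega
        exact_mod_cast this
      set y : ℝ := π ^ 2 / t * (n : ℝ) ^ 2 with hy
      have hy0 : 0 < y := by positivity
      have hC : |CC i (-(π ^ 2 / t ^ 2) * (n : ℝ) ^ 2 * u)| ≤ B := by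
        have := hBb (π ^ 2 / t ^ 2 * (n : ℝ) ^ 2 * u) (by positivity)
        convert this using 3
        ring
      have he : Real.exp (-(π ^ 2 / t) * (n : ℝ) ^ 2) ≤
          (Nat.factorial (2 * i + 2)) / y ^ (2 * i + 2) := by
        rw [show -(π ^ 2 / t) * (n : ℝ) ^ 2 = -y by rw [hy]; ring, Real.exp_neg,
          ← inv_div]
        have := Real.pow_div_factorial_le_exp y hy0.le (2 * i + 2)
        gcongr
      have hd : |(-(π ^ 2 / t ^ 2) * (n : ℝ) ^ 2) ^ i| = (y / t) ^ i := by
        rw [abs_pow, show -(π ^ 2 / t ^ 2) * (n : ℝ) ^ 2 = -(y / t) by rw [hy]; field_simp,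
          abs_neg, abs_of_pos (by positivity)]
      have hyn : (n : ℝ) ^ 2 / t ≤ y := by
        rw [hy, div_mul_eq_mul_div]
        gcongr
        have : (1 : ℝ) ≤ π ^ 2 := by
          have := Real.pi_gt_three
          nlinarith
        nlinarith
      have hyp : (n : ℝ) ^ 2 / t ^ (i + 2) ≤ y ^ (i + 2) := by
        calc (n : ℝ) ^ 2 / t ^ (i + 2) ≤ ((n : ℝ) ^ 2) ^ (i + 2) / t ^ (i + 2) := by
              gcongr
              exact le_self_pow₀ hn1 (by omega)
          _ = ((n : ℝ) ^ 2 / t) ^ (i + 2) := by rw [div_pow]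
          _ ≤ y ^ (i + 2) := by gcongr
      rw [abs_mul, abs_mul, abs_of_pos (Real.exp_pos _), hd]
      calc Real.exp (-(π ^ 2 / t) * (n : ℝ) ^ 2) * (y / t) ^ i *
            |CC i (-(π ^ 2 / t ^ 2) * (n : ℝ) ^ 2 * u)|
          ≤ (Nat.factorial (2 * i + 2)) / y ^ (2 * i + 2) * (y / t) ^ i * B := by gcongr
        _ = B * (Nat.factorial (2 * i + 2)) / t ^ i * (1 / y ^ (i + 2)) := by
            rw [show 2 * i + 2 = i + (i + 2) by ring, pow_add, div_pow]
            field_simp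
        _ ≤ B * (Nat.factorial (2 * i + 2)) / t ^ i * (1 / ((n : ℝ) ^ 2 / t ^ (i + 2))) := by
            have : 0 < (n : ℝ) ^ 2 / t ^ (i + 2) := by positivity
            gcongr
        _ = B * (Nat.factorial (2 * i + 2)) * t ^ 2 * (1 / (n : ℝ) ^ 2) := by
            rw [pow_add]
            field_simp

lemma KK_err {σ ε : ℝ} (hσ : 0 ≤ σ) {H : ℕ → ℝ → ℝ} {u : ℝ}
    (hH : ∀ i ≤ 5, |H i u - (if i = 0 then 1 else 0)| ≤ ε) (j : ℕ) : ∀ i, i + j ≤ 5 →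
    |KK σ H j i u - (if i = 0 then σ ^ j else 0)| ≤ (σ + 1) ^ j * ε := by
  induction j with
  | zero =>
    intro i hi
    simpa [KK] using hH i hi
  | succ j ih =>
    intro i hi
    have a := ih i (by omega)
    have b := ih (i + 1) (by omega)
    rw [if_neg (by omega), sub_zero] at b
    have e : KK σ H (j + 1) i u - (if i = 0 then σ ^ (j + 1) else 0) =
        σ * (KK σ H j i u - (if i = 0 then σ ^ j else 0)) + KK σ H j (i + 1) u := by
      rw [KK]
      split_ifs <;> ring
    rw [e]
    calc _ ≤ |σ * (KK σ H j i u - (if i = 0 then σ ^ j else 0))| + |KK σ H j (i + 1) u| :=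
          abs_add_le _ _
      _ ≤ σ * ((σ + 1) ^ j * ε) + (σ + 1) ^ j * ε := by
          rw [abs_mul, abs_of_nonneg hσ]
          gcongr
      _ = _ := by ring

/-- Uniform bound on the Gaussian-type factor. -/
lemma KK_main : ∃ K : ℝ, 0 < K ∧ ∀ t : ℝ, 0 < t → t ≤ 1 → ∀ u : ℝ, 0 ≤ u → ∀ j ≤ 5,
    |(4 * t) ^ 5 * KK (1 / (4 * t)) (FF (π ^ 2 / t) (-(π ^ 2 / t ^ 2))) j 0 u - (4 * t) ^ (5 - j)|
      ≤ K * t ^ 2 := by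
  choose K hK hKb using FF_err
  have hKs : ∀ i ≤ 5, K i ≤ ∑ i ∈ Finset.range 6, K i := fun i hi =>
    Finset.single_le_sum (f := K) (fun i _ => (hK i).le) (Finset.mem_range.2 (by omega))
  set S := ∑ i ∈ Finset.range 6, K i with hS
  have hSp : 0 < S := (hK 0).trans_le (hKs 0 (by norm_num))
  refine ⟨5 ^ 5 * S, by positivity, fun t ht ht1 u hu j hj => ?_⟩
  have hσ : (0 : ℝ) ≤ 1 / (4 * t) := by positivity
  have h := KK_err hσ (H := FF (π ^ 2 / t) (-(π ^ 2 / t ^ 2))) (u := u) (ε := S * t ^ 2)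
    (fun i hi => (hKb i t ht u hu).trans (by gcongr; exact hKs i hi)) j 0 (by omega)
  rw [if_pos rfl] at h
  have e : (4 * t) ^ (5 - j) = (4 * t) ^ 5 * (1 / (4 * t)) ^ j := by
    rw [show (4 * t) ^ 5 = (4 * t) ^ (5 - j) * (4 * t) ^ j by
      rw [← pow_add]; congr 1; omega, mul_assoc, ← mul_pow, mul_one_div_cancel (by positivity),
      one_pow, mul_one]
  rw [e, ← mul_sub, abs_mul, abs_of_pos (by positivity)]
  calc (4 * t) ^ 5 * _ ≤ (4 * t) ^ 5 * ((1 / (4 * t) + 1) ^ j * (S * t ^ 2)) := by gcongr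
    _ ≤ (4 * t) ^ 5 * ((1 / (4 * t) + 1) ^ 5 * (S * t ^ 2)) := by
        gcongr
        linarith
    _ = (1 + 4 * t) ^ 5 * (S * t ^ 2) := by
        rw [← mul_assoc, ← mul_pow]
        congr 2
        field_simp
    _ ≤ 5 ^ 5 * (S * t ^ 2) := by
        gcongr
        linarith
    _ = _ := by ring

lemma prefactor {t : ℝ} (ht : 0 < t) :
    (4 * π * t) ^ ((11 : ℝ) / 2) * √(π / t) = 2 * π * (4 * π * t) ^ 5 := by
  have hπ := Real.pi_pos
  have hp : 0 < 4 * π * t := by positivity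
  have e : (4 * π * t) ^ ((11 : ℝ) / 2) = (4 * π * t) ^ 5 * √(4 * π * t) := by
    rw [show (11 : ℝ) / 2 = ((5 : ℕ) : ℝ) + 1 / 2 by norm_num, Real.rpow_add hp,
      Real.rpow_natCast, Real.sqrt_eq_rpow]
  rw [e, mul_assoc, ← Real.sqrt_mul hp.le, show 4 * π * t * (π / t) = (2 * π) ^ 2 by
    field_simp; ring, Real.sqrt_sq (by positivity)]
  ring

lemma abs_mul_le_of {a b A B : ℝ} (ha : |a| ≤ A) (hb : |b| ≤ B) : |a * b| ≤ A * B := by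
  rw [abs_mul]
  exact mul_le_mul ha hb (abs_nonneg _) ((abs_nonneg _).trans ha)

lemma poly_bounds {r1 r2 r3 r4 : ℝ} (h1 : |r1| ≤ 1) (h2 : |r2| ≤ 1) (h3 : |r3| ≤ 1)
    (h4 : |r4| ≤ 1) :
    |45 * r1 ^ 2 - 10 * r2| ≤ 55 ∧ |-105 * r1 ^ 3 + 60 * r1 * r2 - 5 * r3| ≤ 170 ∧
    |105 * r1 ^ 4 - 105 * r1 ^ 2 * r2 + 15 * r1 * r3 + 10 * r2 ^ 2 - r4| ≤ 236 := by
  have p2 : |r1 ^ 2| ≤ 1 := by rw [abs_pow]; exact pow_le_one₀ (abs_nonneg _) h1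
  have p3 : |r1 ^ 3| ≤ 1 := by rw [abs_pow]; exact pow_le_one₀ (abs_nonneg _) h1
  have p4 : |r1 ^ 4| ≤ 1 := by rw [abs_pow]; exact pow_le_one₀ (abs_nonneg _) h1
  have q2 : |r2 ^ 2| ≤ 1 := by rw [abs_pow]; exact pow_le_one₀ (abs_nonneg _) h2
  have m12 := abs_mul_le_of h1 h2
  have m13 := abs_mul_le_of h1 h3
  have m112 := abs_mul_le_of p2 h2
  simp only [abs_le] at *
  refine ⟨?_, ?_, ?_⟩ <;> constructor <;> linarith

lemma final_bound {K t r1 y z : ℝ} (ht : 0 < t) (ht1 : t ≤ 1) (hr : |r1| ≤ 1)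
    (hy : |y| ≤ K * t ^ 2) (hz : |z| ≤ 625 * t ^ 2) :
    |(1 + 25 * t + z) * (1 - 40 * r1 * t + y) - 1 - (25 - 40 * r1) * t| ≤
      (625 * (41 + K) + 26 * K + 1000) * t ^ 2 := by
  have hK : 0 ≤ K := by
    have := (abs_nonneg y).trans hy
    exact nonneg_of_mul_nonneg_left this (by positivity)
  have e : (1 + 25 * t + z) * (1 - 40 * r1 * t + y) - 1 - (25 - 40 * r1) * t =
      z * (1 - 40 * (r1 * t) + y) + (1 + 25 * t) * y + (-1000) * (r1 * t ^ 2) := by ring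
  have t2 : t ^ 2 ≤ 1 := pow_le_one₀ ht.le ht1
  have a1 : |r1 * t| ≤ 1 := by
    have := abs_mul_le_of hr (show |t| ≤ 1 by rwa [abs_of_pos ht])
    linarith
  have hyK : |y| ≤ K := hy.trans (by nlinarith)
  have a2 : |1 - 40 * (r1 * t) + y| ≤ 41 + K := by
    rw [abs_le] at *
    constructor <;> linarith
  have b1 := abs_mul_le_of hz a2
  have b2 : |(1 + 25 * t) * y| ≤ 26 * (K * t ^ 2) :=
    abs_mul_le_of (by rw [abs_of_pos (by positivity)]; linarith) hy
  have b3 : |(-1000) * (r1 * t ^ 2)| ≤ 1000 * (1 * t ^ 2) :=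
    abs_mul_le_of (by norm_num) (abs_mul_le_of hr (by rw [abs_of_pos (by positivity)]))
  rw [e]
  have := abs_add_three (z * (1 - 40 * (r1 * t) + y)) ((1 + 25 * t) * y) ((-1000) * (r1 * t ^ 2))
  linarith

lemma y_bound {K t r1 A3 A2 A1 k5 k4 k3 k2 k1 : ℝ} (hK : 0 < K) (ht : 0 < t) (ht1 : t ≤ 1)
    (hr : |r1| ≤ 1)
    (h3 : |A3| ≤ 55) (h2 : |A2| ≤ 170) (h1 : |A1| ≤ 236)
    (b5 : |k5 - 1| ≤ K * t ^ 2) (b4 : |k4 - 4 * t| ≤ K * t ^ 2)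
    (b3 : |k3 - (4 * t) ^ 2| ≤ K * t ^ 2) (b2 : |k2 - (4 * t) ^ 3| ≤ K * t ^ 2)
    (b1 : |k1 - (4 * t) ^ 4| ≤ K * t ^ 2) :
    |k5 + (-10 * r1) * k4 + A3 * k3 + A2 * k2 + A1 * k1 - 1 + 40 * r1 * t| ≤
      (472 * K + 72176) * t ^ 2 := by
  have t2 : 0 < t ^ 2 := by positivity
  have t3 : t ^ 3 ≤ t ^ 2 := pow_le_pow_of_le_one ht.le ht1 (by norm_num)
  have t4 : t ^ 4 ≤ t ^ 2 := pow_le_pow_of_le_one ht.le ht1 (by norm_num)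
  have t3p : 0 < t ^ 3 := by positivity
  have t4p : 0 < t ^ 4 := by positivity
  have c3 : |k3| ≤ (K + 16) * t ^ 2 := by
    rw [mul_pow] at b3
    rw [abs_le] at *
    constructor <;> nlinarith
  have c2 : |k2| ≤ (K + 64) * t ^ 2 := by
    rw [mul_pow] at b2
    rw [abs_le] at *
    constructor <;> nlinarith
  have c1 : |k1| ≤ (K + 256) * t ^ 2 := by
    rw [mul_pow] at b1
    rw [abs_le] at *
    constructor <;> nlinarith
  have d3 := abs_mul_le_of h3 c3
  have d2 := abs_mul_le_of h2 c2
  have d1 := abs_mul_le_of h1 c1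
  have d4 := abs_mul_le_of hr b4
  have e : k5 + (-10 * r1) * k4 + A3 * k3 + A2 * k2 + A1 * k1 - 1 + 40 * r1 * t =
      (k5 - 1) + (-10) * (r1 * (k4 - 4 * t)) + A3 * k3 + A2 * k2 + A1 * k1 := by ring
  rw [e]
  rw [abs_le] at *
  constructor <;> linarith

lemma ratio_bound {j : ℕ} (hj : 1 ≤ j) {u : ℝ} (hu : 0 < u) : |CC j u / CC 1 u| ≤ 1 := by
  have h1 := CC_pos 1 hu.le
  have h2 := CC_pos j hu.le
  rw [abs_of_pos (by positivity), div_le_one h1]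
  exact CC_anti' hj hu.le

/-- Uniform small-time asymptotics of the heat kernel of `S^11` at `cosh δ`, uniformly for
`δ ∈ (0, ∞)`. -/
theorem qS11_small_time_cosh :
    ∃ C > (0 : ℝ), ∃ t₀ > (0 : ℝ), ∀ t ∈ Set.Ioo (0 : ℝ) t₀, ∀ δ ∈ Set.Ioi (0 : ℝ),
      |(4 * π * t) ^ ((11 : ℝ) / 2) * (Real.sinh δ / δ) ^ 5 * Real.exp (-δ ^ 2 / (4 * t)) *
            qS11 t (Real.cosh δ)
          - 1 - (25 + 20 * (Real.sinh δ - δ * Real.cosh δ) / (δ ^ 2 * Real.sinh δ)) * t|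
        ≤ C * t ^ 2 := by
  obtain ⟨K, hK, hKb⟩ := KK_main
  refine ⟨625 * (41 + (472 * K + 72176)) + 26 * (472 * K + 72176) + 1000, by positivity, 1 / 25,
    by norm_num, ?_⟩
  rintro t ⟨ht, ht25⟩ δ hδ
  have hδ : 0 < δ := hδ
  obtain ⟨u, hudef⟩ : ∃ u : ℝ, u = δ ^ 2 := ⟨_, rfl⟩
  have hu : 0 < u := by rw [hudef]; positivity
  have hπ := Real.pi_pos
  have ht1 : t ≤ 1 := by linarith
  have hs := CC_pos 1 hu.le
  set r1 := CC 2 u / CC 1 u with hr1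
  set r2 := CC 3 u / CC 1 u with hr2
  set r3 := CC 4 u / CC 1 u with hr3
  set r4 := CC 5 u / CC 1 u with hr4
  have b1 : |r1| ≤ 1 := ratio_bound (by norm_num) hu
  have b2 : |r2| ≤ 1 := ratio_bound (by norm_num) hu
  have b3 : |r3| ≤ 1 := ratio_bound (by norm_num) hu
  have b4 : |r4| ≤ 1 := ratio_bound (by norm_num) hu
  obtain ⟨pb3, pb2, pb1⟩ := poly_bounds b1 b2 b3 b4
  have hsum := tsum_T5 ht hu r1 r2 r3 r4 (div_mul_cancel₀ _ hs.ne').symm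
    (div_mul_cancel₀ _ hs.ne').symm (div_mul_cancel₀ _ hs.ne').symm
    (div_mul_cancel₀ _ hs.ne').symm
  set A3 := 45 * r1 ^ 2 - 10 * r2 with hA3
  set A2 := -105 * r1 ^ 3 + 60 * r1 * r2 - 5 * r3 with hA2
  set A1 := 105 * r1 ^ 4 - 105 * r1 ^ 2 * r2 + 15 * r1 * r3 + 10 * r2 ^ 2 - r4 with hA1
  rw [FF_eq_KK ht 5 u hu, FF_eq_KK ht 4 u hu, FF_eq_KK ht 3 u hu, FF_eq_KK ht 2 u hu,
    FF_eq_KK ht 1 u hu] at hsum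
  have kb := hKb t ht ht1 u hu.le
  obtain ⟨k, hk⟩ : ∃ k : ℕ → ℝ,
      ∀ j, KK (1 / (4 * t)) (FF (π ^ 2 / t) (-(π ^ 2 / t ^ 2))) j 0 u = k j :=
    ⟨_, fun _ => rfl⟩
  simp only [hk] at kb hsum
  have hyb := y_bound (k5 := (4 * t) ^ 5 * k 5) (k4 := (4 * t) ^ 5 * k 4)
    (k3 := (4 * t) ^ 5 * k 3) (k2 := (4 * t) ^ 5 * k 2) (k1 := (4 * t) ^ 5 * k 1)
    hK ht ht1 b1 pb3 pb2 pb1 (by simpa using kb 5 (by norm_num))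
    (by simpa using kb 4 (by norm_num)) (by simpa using kb 3 (by norm_num))
    (by simpa using kb 2 (by norm_num)) (by simpa using kb 1 (by norm_num))
  have hzb : |Real.exp (25 * t) - 1 - 25 * t| ≤ 625 * t ^ 2 := by
    have := Real.abs_exp_sub_one_sub_id_le (x := 25 * t)
      (by rw [abs_of_pos (by positivity)]; linarith)
    calc _ ≤ (25 * t) ^ 2 := this
      _ = _ := by ring
  have hfin := final_bound ht ht1 b1 hyb hzb
  -- the main quantity
  have hsinh : Real.sinh δ / δ = 2 * CC 1 u := by
    rw [hudef, ← CC_sinh δ]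
    field_simp
  have hcosh : Real.cosh δ = CC 0 u := by rw [hudef, CC_cosh]
  have hmain : (4 * π * t) ^ ((11 : ℝ) / 2) * (Real.sinh δ / δ) ^ 5 *
      Real.exp (-δ ^ 2 / (4 * t)) * qS11 t (Real.cosh δ) =
      Real.exp (25 * t) * ((4 * t) ^ 5 * k 5 + (-10 * r1) * ((4 * t) ^ 5 * k 4) +
        A3 * ((4 * t) ^ 5 * k 3) + A2 * ((4 * t) ^ 5 * k 2) + A1 * ((4 * t) ^ 5 * k 1)) := by
    rw [hsinh, hcosh, qS11]
    have hG : Real.Gamma 5 = 24 := by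
      have := Real.Gamma_nat_eq_factorial 4
      rw [show ((4 : ℕ) : ℝ) + 1 = 5 by norm_num] at this
      rw [this]
      norm_num [Nat.factorial]
    rw [hG]
    set SS := ∑' m : ℕ, ((m : ℝ) + 5) * Real.exp (-((m * (m + 10) : ℕ) : ℝ) * t) *
      geg5 m (CC 0 u) with hSS
    have e1 : Real.exp (-δ ^ 2 / (4 * t)) * Real.exp (1 / (4 * t) * u) = 1 := by
      rw [← Real.exp_add, hudef, show -δ ^ 2 / (4 * t) + 1 / (4 * t) * δ ^ 2 = 0 by ring,
        Real.exp_zero]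
    have e2 : Real.exp (25 * t) * Real.exp (-25 * t) = 1 := by
      rw [← Real.exp_add, show 25 * t + -25 * t = 0 by ring, Real.exp_zero]
    have e3 := prefactor ht
    set P := (4 * π * t) ^ ((11 : ℝ) / 2) with hP
    set M := k 5 + (-10 * r1) * k 4 + A3 * k 3 + A2 * k 2 + A1 * k 1 with hM
    have hs2 : CC 1 u ^ 5 * (2 * (384 * Real.exp (-25 * t)) * SS) =
        √(π / t) * (Real.exp (1 / (4 * t) * u) * M) := by
      rw [hsum, hM]
      ring
    calc P * (2 * CC 1 u) ^ 5 * Real.exp (-δ ^ 2 / (4 * t)) * (24 / (2 * π ^ 6) * SS)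
        = P * Real.exp (-δ ^ 2 / (4 * t)) / (2 * π ^ 6) *
          (Real.exp (25 * t) * Real.exp (-25 * t)) * (CC 1 u ^ 5 * (2 * 384) * SS) := by
          rw [e2]
          ring
      _ = P * Real.exp (-δ ^ 2 / (4 * t)) / (2 * π ^ 6) * Real.exp (25 * t) *
          (CC 1 u ^ 5 * (2 * (384 * Real.exp (-25 * t)) * SS)) := by ring
      _ = (P * √(π / t)) * (Real.exp (-δ ^ 2 / (4 * t)) * Real.exp (1 / (4 * t) * u)) *
          Real.exp (25 * t) * M / (2 * π ^ 6) := by rw [hs2]; ring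
      _ = Real.exp (25 * t) * ((4 * t) ^ 5 * M) := by
          rw [e3, e1]
          field_simp
      _ = _ := by rw [hM]; ring
  have hr : 25 + 20 * (Real.sinh δ - δ * Real.cosh δ) / (δ ^ 2 * Real.sinh δ) = 25 - 40 * r1 := by
    have ho := CC_ode 0 u
    rw [hr1, hcosh, ← CC_sinh δ, ← hudef]
    norm_num at ho
    rw [← ho]
    field_simp
    rw [hudef]
    ring
  rw [hmain, hr]
  convert hfin using 2
  ring
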